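/- Let K be a Cantor set in ℝ and let G be a finitely generated subgroup of diff^{1+Lip}(K) containing no free subsemigroup on two generators. Then every minimal invariant set for the action of G on K is a finite subset of K. -/

import Mathlib

open Set

/-- `K` is a Cantor set in `ℝ`: nonempty, compact, totally disconnected, perfect. -/
def IsCantorInR (K : Set ℝ) : Prop :=
  K.Nonempty ∧ IsCompact K ∧ IsTotallyDisconnected K ∧ Perfect K

open Classical in
/-- Apply a permutation of `K` to a real number (identity outside `K`). -/
noncomputable def apK (K : Set ℝ) (f : Equiv.Perm K) (y : ℝ) : ℝ :=
  if h : y ∈ K then (f ⟨y, h⟩ : ℝ) else y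

/-- `f` locally coincides with a `C¹` embedding of an open interval with
nowhere-vanishing derivative. -/
def IsD1 (K : Set ℝ) (f : Equiv.Perm K) : Prop :=
  ∀ x : K, ∃ a b : ℝ, (x : ℝ) ∈ Set.Ioo a b ∧
    ∃ F F' : ℝ → ℝ,
      (∀ y ∈ Set.Ioo a b, HasDerivAt F (F' y) y ∧ F' y ≠ 0) ∧
      ContinuousOn F' (Set.Ioo a b) ∧
      Set.InjOn F (Set.Ioo a b) ∧
      (∀ y : ℝ, y ∈ Set.Ioo a b → y ∈ K → F y = apK K f y)

/-- `f` locally coincides with a `C¹` embedding of an open interval with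
nowhere-vanishing derivative whose log-derivative is Lipschitz. -/
def IsD1Lip (K : Set ℝ) (f : Equiv.Perm K) : Prop :=
  ∀ x : K, ∃ a b : ℝ, (x : ℝ) ∈ Set.Ioo a b ∧
    ∃ F F' : ℝ → ℝ,
      (∀ y ∈ Set.Ioo a b, HasDerivAt F (F' y) y ∧ F' y ≠ 0) ∧
      ContinuousOn F' (Set.Ioo a b) ∧
      Set.InjOn F (Set.Ioo a b) ∧
      (∃ C : NNReal, LipschitzOnWith C (fun y => Real.log |F' y|) (Set.Ioo a b)) ∧
      (∀ y : ℝ, y ∈ Set.Ioo a b → y ∈ K → F y = apK K f y)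

/-- membership in `diff¹(K)`: a homeomorphism of `K` locally coinciding
with `C¹` diffeomorphisms of intervals of `ℝ`. -/
def MemDiff1 (K : Set ℝ) (f : Equiv.Perm K) : Prop :=
  Continuous (fun x : K => f x) ∧ Continuous (fun x : K => f.symm x) ∧ IsD1 K f

/-- membership in `diff^{1+Lip}(K)`. -/
def MemDiffLip (K : Set ℝ) (f : Equiv.Perm K) : Prop :=
  Continuous (fun x : K => f x) ∧ Continuous (fun x : K => f.symm x) ∧ IsD1Lip K f

/-- The derivative of `f` at `x`, as a limit of difference quotients within `K`. -/
def HasDerivOnK (K : Set ℝ) (f : Equiv.Perm K) (x d : ℝ) : Prop :=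
  Filter.Tendsto (fun y : ℝ => (apK K f y - apK K f x) / (y - x))
    (nhdsWithin x (K \ {x})) (nhds d)

/-- `f` is increasing on the interval `I`: it coincides on `I ∩ K` with an
increasing `C¹` diffeomorphism of `I` onto an interval of `ℝ`. -/
def IncreasingOnK (K : Set ℝ) (f : Equiv.Perm K) (I : Set ℝ) : Prop :=
  ∃ F F' : ℝ → ℝ,
    StrictMonoOn F I ∧
    (∀ y ∈ I, HasDerivWithinAt F (F' y) I y ∧ 0 < F' y) ∧
    ContinuousOn F' I ∧
    (∀ y ∈ I, y ∈ K → F y = apK K f y)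

/-- `A` is invariant under the subgroup `G`. -/
def IsInvariantSet (K : Set ℝ) (G : Subgroup (Equiv.Perm K)) (A : Set ℝ) : Prop :=
  ∀ g ∈ G, ∀ x ∈ A, apK K g x ∈ A

/-- `A` is a minimal invariant set for the action of `G` on `K`. -/
def IsMinimalInvariantSet (K : Set ℝ) (G : Subgroup (Equiv.Perm K)) (A : Set ℝ) : Prop :=
  A.Nonempty ∧ A ⊆ K ∧ IsClosed A ∧ IsInvariantSet K G A ∧
    ∀ B : Set ℝ, B.Nonempty → B ⊆ A → IsClosed B → IsInvariantSet K G B → B = A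

/-- The set of points of `K` fixed by every element of `H`. -/
def fixedSet (K : Set ℝ) (H : Subgroup (Equiv.Perm K)) : Set ℝ :=
  {x | x ∈ K ∧ ∀ g ∈ H, apK K g x = x}

/-- `a, b` generate a free subsemigroup: distinct nonempty positive words in
`a` and `b` define distinct elements. -/
def IsFreePair {M : Type*} [Monoid M] (a b : M) : Prop :=
  ∀ w₁ w₂ : List Bool, w₁ ≠ [] → w₂ ≠ [] →
    (w₁.map (fun t => if t then a else b)).prod = (w₂.map (fun t => if t then a else b)).prod →
    w₁ = w₂

/-- `G` contains no free subsemigroup on two generators. -/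
def HasNoFreeSubsemigroup {Γ : Type*} [Group Γ] (G : Subgroup Γ) : Prop :=
  ¬ ∃ a ∈ G, ∃ b ∈ G, IsFreePair a b

/-- `p` is accumulated on the left by `A`. -/
def AccLeft (p : ℝ) (A : Set ℝ) : Prop := ∀ α > 0, (Set.Ico (p - α) p ∩ A).Nonempty

/-- `p` is accumulated on the right by `A`. -/
def AccRight (p : ℝ) (A : Set ℝ) : Prop := ∀ α > 0, (Set.Ioc p (p + α) ∩ A).Nonempty

/-!
Suppose a minimal set `A` is infinite. It has empty interior in `ℝ`, so it has infinitely many gaps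
(bounded complementary intervals), and these have finite total length. Fix a finite symmetric
generating set and a small scale `δ`, and join two gaps shorter than `δ` when a generator carries
one to the other. By minimality no finite family of gaps has an invariant set of endpoints, so a
finite connected component must contain a gap that some generator expands to length at least `δ`;
there are finitely many such gaps, hence some component is infinite.

As in Sacksteder's theorem, the product of generators along a simple path in that component has
distortion bounded in terms of the total length of the gaps, independently of the path. Therefore a
fixed ball around an endpoint of one gap is mapped next to arbitrarily short gaps, i.e. into
arbitrarily small balls. Minimality brings these small images back into two disjoint parts of the
ball, and ping-pong yields a free subsemigroup.
-/

open Filter Topology Metric MulAction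
open scoped Pointwise NNReal

section PingPong

variable {ι M X : Type*} [Monoid M] [MulAction M X] {φ : ι → M} {U : Set X}

theorem list_prod_map_smul_subset (hsub : ∀ i, φ i • U ⊆ U) (w : List ι) :
    (w.map φ).prod • U ⊆ U := by
  induction w with
  | nil => simp only [List.map_nil, List.prod_nil, one_smul, subset_rfl]
  | cons i w ih =>
    rw [List.map_cons, List.prod_cons, mul_smul]
    exact (smul_set_mono ih).trans (hsub i)

theorem injective_list_prod_map_of_pingPong [IsLeftCancelMul M] [Nontrivial ι] (hU : U.Nonempty)
    (hsub : ∀ i, φ i • U ⊆ U) (hdisj : Pairwise fun i j => Disjoint (φ i • U) (φ j • U)) :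
    Function.Injective fun w : List ι => (w.map φ).prod := by
  obtain ⟨x, hx⟩ := hU
  have mem_first : ∀ i w, ∀ y ∈ U, ((i :: w).map φ).prod • y ∈ φ i • U := fun i w y hy => by
    rw [List.map_cons, List.prod_cons, mul_smul]
    exact smul_mem_smul_set (list_prod_map_smul_subset hsub w (smul_mem_smul_set hy))
  have ne_one : ∀ i w, ((i :: w).map φ).prod ≠ 1 := fun i w h => by
    obtain ⟨j, hji⟩ := exists_ne i
    have hy : φ j • x ∈ φ j • U := smul_mem_smul_set hx
    have hy' := mem_first i w _ (hsub j hy)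
    rw [h, one_smul] at hy'
    exact (hdisj hji).notMem_of_mem_left hy hy'
  intro w₁
  induction w₁ with
  | nil =>
    rintro (_ | ⟨j, w₂⟩) h
    · rfl
    · exact (ne_one j w₂ h.symm).elim
  | cons i w₁ ih =>
    rintro (_ | ⟨j, w₂⟩) h
    · exact (ne_one i w₁ h).elim
    · obtain rfl : i = j := by
        by_contra hij
        refine (hdisj hij).notMem_of_mem_left (mem_first i w₁ x hx) ?_
        exact (congrArg (· • x) h).symm ▸ mem_first j w₂ x hx
      simp only [List.map_cons, List.prod_cons, mul_right_inj] at h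
      rw [ih h]

theorem isFreePair_of_pingPong [IsLeftCancelMul M] {a b : M} (hU : U.Nonempty)
    (ha : a • U ⊆ U) (hb : b • U ⊆ U) (hab : Disjoint (a • U) (b • U)) : IsFreePair a b :=
  fun _ _ _ _ h => injective_list_prod_map_of_pingPong hU
    (Bool.forall_bool.2 ⟨hb, ha⟩)
    (by rintro (_ | _) (_ | _) hne <;> first | exact absurd rfl hne | exact hab | exact hab.symm) h

theorem IsFreePair.map {N : Type*} [Monoid N] {a b : M} (h : IsFreePair a b) {f : M →* N}
    (hf : Function.Injective f) : IsFreePair (f a) (f b) := by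
  intro w₁ w₂ h₁ h₂ heq
  refine h w₁ w₂ h₁ h₂ (hf ?_)
  simpa only [map_list_prod, List.map_map, Function.comp_def, apply_ite f] using heq

end PingPong

section MinimalAction

variable {X : Type*}

theorem exists_smul_notMem_of_finite {G : Type*} [TopologicalSpace X] [T1Space X] [Infinite X]
    [Group G] [MulAction G X] [IsMinimal G X] {S : Set G} (hS : Subgroup.closure S = ⊤)
    {B : Set X} (hB : B.Finite) (hne : B.Nonempty) : ∃ s ∈ S, ∃ x ∈ B, s • x ∉ B := by
  by_contra! hinv
  have hle : Subgroup.closure S ≤ stabilizer G B := (Subgroup.closure_le _).2 fun s hs =>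
    (mem_stabilizer_set_iff_smul_set_subset hB).2 (image_subset_iff.2 (hinv s hs))
  have hsmul : ∀ g : G, g • B ⊆ B := fun g =>
    (mem_stabilizer_iff.1 (hle (hS ▸ Subgroup.mem_top g))).subset
  rcases eq_empty_or_univ_of_smul_invariant_closed G hB.isClosed hsmul with h | h
  · exact hne.ne_empty h
  · exact infinite_univ (h ▸ hB)

theorem nontrivial_of_isOpen_of_isMinimal (G : Type*) [TopologicalSpace X] [CompactSpace X]
    [Infinite X] [Group G] [MulAction G X] [ContinuousConstSMul G X] [IsMinimal G X]
    {U : Set X} (hU : IsOpen U) (hne : U.Nonempty) : U.Nontrivial := by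
  by_contra hsub
  rw [not_nontrivial_iff] at hsub
  have : DiscreteTopology X := discreteTopology_iff_isOpen_singleton.2 fun x => by
    obtain ⟨g, hg⟩ := hU.exists_smul_mem G x hne
    have hpre : (g • · : X → X) ⁻¹' U = {x} := eq_singleton_iff_unique_mem.2
      ⟨hg, fun y hy => smul_left_cancel g (hsub hy hg)⟩
    exact hpre ▸ hU.preimage (continuous_const_smul g)
  exact not_finite_iff_infinite.2 ‹_› finite_of_compact_of_discrete

theorem exists_forall_smul_ball_subset (M : Type*) [PseudoMetricSpace X] [CompactSpace X]
    [Monoid M] [MulAction M X] [ContinuousConstSMul M X] [IsMinimal M X] {V : Set X}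
    (hV : IsOpen V) (hne : V.Nonempty) : ∃ η > 0, ∀ x, ∃ g : M, g • ball x η ⊆ V := by
  obtain ⟨η, hη, hball⟩ := lebesgue_number_lemma_of_metric isCompact_univ
    (fun g : M => hV.preimage (continuous_const_smul g)) (hV.iUnion_preimage_smul M hne).ge
  exact ⟨η, hη, fun x => (hball x (mem_univ x)).imp fun g => image_subset_iff.2⟩

theorem exists_isFreePair_of_contracting {G : Type*} [MetricSpace X] [CompactSpace X] [Infinite X]
    [Group G] [MulAction G X] [ContinuousConstSMul G X] [IsMinimal G X] {U : Set X}
    (hU : IsOpen U) (hne : U.Nonempty)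
    (hcontr : ∀ ε > 0, ∃ g : G, ∃ x, g • U ⊆ ball x ε) : ∃ a b : G, IsFreePair a b := by
  obtain ⟨x, hx, y, hy, hxy⟩ := nontrivial_of_isOpen_of_isMinimal G hU hne
  obtain ⟨V, W, hV, hW, hxV, hyW, hVW⟩ := t2_separation hxy
  obtain ⟨η, hη, toV⟩ := exists_forall_smul_ball_subset G (hU.inter hV) ⟨x, hx, hxV⟩
  obtain ⟨θ, hθ, toW⟩ := exists_forall_smul_ball_subset G (hU.inter hW) ⟨y, hy, hyW⟩
  obtain ⟨f, c, hf⟩ := hcontr (min η θ) (lt_min hη hθ)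
  obtain ⟨g, hg⟩ := toV c
  obtain ⟨h, hh⟩ := toW c
  have hgf : (g * f) • U ⊆ U ∩ V := by
    rw [mul_smul]
    exact (smul_set_mono (hf.trans (ball_subset_ball (min_le_left _ _)))).trans hg
  have hhf : (h * f) • U ⊆ U ∩ W := by
    rw [mul_smul]
    exact (smul_set_mono (hf.trans (ball_subset_ball (min_le_right _ _)))).trans hh
  exact ⟨g * f, h * f, isFreePair_of_pingPong hne (hgf.trans inter_subset_left)
    (hhf.trans inter_subset_left)
    (hVW.mono (hgf.trans inter_subset_right) (hhf.trans inter_subset_right))⟩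

end MinimalAction

section Gaps

/-- The gaps of a linear order, each recorded twice, once for each choice of a base endpoint: a
map that reverses the order locally still carries gaps to gaps. -/
def gaps (α : Type*) [Preorder α] : Set (α × α) :=
  {p | p.1 ⋖ p.2 ∨ p.2 ⋖ p.1}

variable {α : Type*} [LinearOrder α]

theorem fst_ne_snd_of_mem_gaps {p : α × α} (hp : p ∈ gaps α) : p.1 ≠ p.2 :=
  hp.elim CovBy.ne fun h => h.ne'

theorem uIcc_eq_pair_of_mem_gaps {p : α × α} (hp : p ∈ gaps α) : uIcc p.1 p.2 = {p.1, p.2} := by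
  rcases hp with h | h
  · rw [uIcc_of_le h.le, h.Icc_eq]
  · rw [uIcc_of_ge h.le, h.Icc_eq, pair_comm]

theorem mem_gaps_of_uIcc_subset {p : α × α} (hne : p.1 ≠ p.2) (h : uIcc p.1 p.2 ⊆ {p.1, p.2}) :
    p ∈ gaps α := by
  rcases hne.lt_or_gt with hlt | hlt
  · refine Or.inl ⟨hlt, fun c h₁ h₂ => ?_⟩
    exact (h (Icc_subset_uIcc ⟨h₁.le, h₂.le⟩)).elim h₁.ne' h₂.ne
  · refine Or.inr ⟨hlt, fun c h₁ h₂ => ?_⟩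
    exact (h (Icc_subset_uIcc' ⟨h₁.le, h₂.le⟩)).elim h₂.ne h₁.ne'

theorem infinite_of_forall_lt_exists_mem_Ico [Infinite α] {L : Set α}
    (hL : ∀ x y, x < y → ∃ c ∈ L, c ∈ Ico x y) : L.Infinite := by
  have hmono : StrictMono fun x => L ∩ Iio x := fun x y hxy => by
    obtain ⟨c, hc, hxc, hcy⟩ := hL x y hxy
    exact (ssubset_iff_of_subset (inter_subset_inter_right L (Iio_subset_Iio hxy.le))).2
      ⟨c, ⟨hc, hcy⟩, fun h => hxc.not_gt h.2⟩
  intro hfin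
  exact infinite_of_injective_forall_mem hmono.injective (fun x => inter_subset_left)
    hfin.finite_subsets

theorem exists_covBy_of_interior_eq_empty {A : Set ℝ} (hA : IsCompact A)
    (hint : interior A = ∅) {x y : A} (hxy : x < y) : ∃ p : A × A, p.1 ⋖ p.2 ∧ p.1 ∈ Ico x y := by
  have : CompactSpace A := isCompact_iff_compactSpace.1 hA
  obtain ⟨c, ⟨hxc, hcy⟩, hcA⟩ : ∃ c ∈ Ioo (x : ℝ) y, c ∉ A := by
    refine not_subset.1 fun hsub => ?_
    have hsub_int := interior_maximal hsub isOpen_Ioo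
    rw [hint, subset_empty_iff, Ioo_eq_empty_iff] at hsub_int
    exact hsub_int hxy
  have hne : ∀ w : A, (w : ℝ) ≠ c := fun w h => hcA (h ▸ w.2)
  obtain ⟨a, hac, ha⟩ := (isClosed_le continuous_subtype_val continuous_const : IsClosed
    {w : A | (w : ℝ) ≤ c}).isCompact.exists_isGreatest ⟨x, hxc.le⟩
  obtain ⟨b, hcb, hb⟩ := (isClosed_le continuous_const continuous_subtype_val : IsClosed
    {w : A | c ≤ (w : ℝ)}).isCompact.exists_isLeast ⟨y, hcy.le⟩
  have hac' : (a : ℝ) < c := hac.lt_of_ne (hne a)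
  have hcb' : c < (b : ℝ) := hcb.lt_of_ne (hne b).symm
  refine ⟨(a, b), ⟨hac'.trans hcb', fun w haw hwb => ?_⟩, ha hxc.le, hac'.trans hcy⟩
  rcases le_total (w : ℝ) c with h | h
  · exact (ha h).not_gt haw
  · exact (hb h).not_gt hwb

theorem infinite_gaps {A : Set ℝ} (hA : IsCompact A) (hint : interior A = ∅) [Infinite A] :
    (gaps A).Infinite := by
  refine Infinite.of_image Prod.fst (infinite_of_forall_lt_exists_mem_Ico fun x y hxy => ?_)
  obtain ⟨p, hp, hmem⟩ := exists_covBy_of_interior_eq_empty hA hint hxy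
  exact ⟨p.1, ⟨p, Or.inl hp, rfl⟩, hmem⟩

theorem infinite_of_infinite_gaps {α : Type*} [Preorder α] (h : (gaps α).Infinite) :
    Infinite α :=
  not_finite_iff_infinite.1 fun _ => h (toFinite _)

theorem pairwise_disjoint_Ioo_of_covBy (A : Set ℝ) : Pairwise fun p q : {p : A × A | p.1 ⋖ p.2} =>
    Disjoint (Ioo (p.1.1 : ℝ) p.1.2) (Ioo (q.1.1 : ℝ) q.1.2) := by
  rintro ⟨p, hp : p.1 ⋖ p.2⟩ ⟨q, hq : q.1 ⋖ q.2⟩ hne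
  refine disjoint_left.2 fun x hxp hxq => hne (Subtype.ext ?_)
  have hpq : p.1 < q.2 := hxp.1.trans hxq.2
  have hqp : q.1 < p.2 := hxq.1.trans hxp.2
  exact Prod.ext ((hq.le_of_lt hpq).antisymm (hp.le_of_lt hqp))
    ((hp.ge_of_gt hpq).antisymm (hq.ge_of_gt hqp))

theorem summable_dist_covBy {A : Set ℝ} (hA : Bornology.IsBounded A) :
    Summable fun p : {p : A × A | p.1 ⋖ p.2} => dist p.1.1 p.1.2 := by
  have hsub : ⋃ p : {p : A × A | p.1 ⋖ p.2}, Ioo (p.1.1 : ℝ) p.1.2 ⊆ Icc (sInf A) (sSup A) :=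
    iUnion_subset fun p => Ioo_subset_Icc_self.trans <| Icc_subset_Icc
      (hA.subset_Icc_sInf_sSup p.1.1.2).1 (hA.subset_Icc_sInf_sSup p.1.2.2).2
  have hfin := ((MeasureTheory.tsum_meas_le_meas_iUnion_of_disjoint MeasureTheory.volume
    (fun _ => measurableSet_Ioo) (pairwise_disjoint_Ioo_of_covBy A)).trans
    (MeasureTheory.measure_mono hsub)).trans_lt measure_Icc_lt_top
  refine (ENNReal.summable_toReal hfin.ne).congr fun p => ?_
  have hle : (p.1.1 : ℝ) ≤ p.1.2 := (CovBy.le p.2 : p.1.1 ≤ p.1.2)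
  rw [Real.volume_Ioo, ENNReal.toReal_ofReal (sub_nonneg.2 hle), dist_comm, Subtype.dist_eq,
    Real.dist_eq, abs_of_nonneg (sub_nonneg.2 hle)]

theorem summable_dist_gaps {A : Set ℝ} (hA : Bornology.IsBounded A) :
    Summable fun p : gaps A => dist p.1.1 p.1.2 := by
  have hcov := summable_dist_covBy hA
  have hswap : Summable fun p : {p : A × A | p.2 ⋖ p.1} => dist p.1.1 p.1.2 :=
    (hcov.comp_injective (i := fun p : {p : A × A | p.2 ⋖ p.1} => ⟨p.1.swap, p.2⟩)
      fun p q h => Subtype.ext (Prod.swap_injective (congrArg Subtype.val h))).congr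
      fun p => dist_comm _ _
  have hdisj : Disjoint {p : A × A | p.1 ⋖ p.2} {p | p.2 ⋖ p.1} :=
    disjoint_left.2 fun p h h' => h.lt.not_gt h'.lt
  exact (HasSum.add_disjoint (f := fun p : A × A => dist p.1 p.2) hdisj hcov.hasSum
    hswap.hasSum).summable

theorem finite_le_dist_gaps {α : Type*} [LinearOrder α] [PseudoMetricSpace α]
    (hsum : Summable fun p : gaps α => dist p.1.1 p.1.2) {ε : ℝ} (hε : 0 < ε) :
    {p ∈ gaps α | ε ≤ dist p.1 p.2}.Finite := by
  have := hsum.tendsto_cofinite_zero.eventually_lt_const hε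
  rw [eventually_cofinite] at this
  refine (this.image Subtype.val).subset ?_
  rintro p ⟨hp, hle⟩
  exact ⟨⟨p, hp⟩, hle.not_gt, rfl⟩

end Gaps

section Distortion

variable {α β : Type*}

/-- Bounded distortion at scales below `δ`: passing to the image multiplies the ratio of the
distances from `x` to two nearby points by at most `exp (C (dist x y + dist x z))`. The case
`z = x` is vacuous because `t / 0 = 0`. -/
def BoundedDistortion [PseudoMetricSpace α] [PseudoMetricSpace β] (f : α → β) (δ : ℝ) (C : ℝ≥0) :
    Prop :=
  ∀ x y z, dist x y < δ → dist x z < δ →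
    dist (f x) (f y) / dist (f x) (f z) ≤
      dist x y / dist x z * Real.exp (C * (dist x y + dist x z))

/-- Monotonicity, of either sense, at scales below `δ`, in the form needed to push gaps forward. -/
def PreservesBetweenness [PseudoMetricSpace α] [Lattice α] [Lattice β] (f : α → β) (δ : ℝ) :
    Prop :=
  ∀ x y, dist x y < δ → MapsTo f (uIcc x y) (uIcc (f x) (f y))

theorem eventually_smul_mem_gaps {G : Type*} [LinearOrder α] [PseudoMetricSpace α]
    [CompactSpace α] [Group G] [MulAction G α] [ContinuousConstSMul G α] {g : G}
    (hg : ∀ᶠ δ in 𝓝[>] 0, PreservesBetweenness (g⁻¹ • · : α → α) δ) :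
    ∀ᶠ δ in 𝓝[>] 0, ∀ p ∈ gaps α, dist p.1 p.2 < δ → g • p ∈ gaps α := by
  obtain ⟨η, hη, hη0⟩ := (hg.and self_mem_nhdsWithin).exists
  obtain ⟨δ₀, hδ₀, huc⟩ := Metric.uniformContinuous_iff.1
    (CompactSpace.uniformContinuous_of_continuous (continuous_const_smul (T := α) g)) η hη0
  filter_upwards [Ioo_mem_nhdsGT hδ₀] with δ hδ p hp hlt
  refine mem_gaps_of_uIcc_subset ((MulAction.injective g).ne (fst_ne_snd_of_mem_gaps hp))
    fun x hx => ?_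
  have hx' : g⁻¹ • x ∈ uIcc p.1 p.2 := by
    simpa only [Prod.smul_fst, Prod.smul_snd, inv_smul_smul]
      using hη _ _ (huc (hlt.trans hδ.2)) hx
  rw [uIcc_eq_pair_of_mem_gaps hp] at hx'
  exact hx'.imp inv_smul_eq_iff.1 inv_smul_eq_iff.1

/-- The distance from the base endpoint of the pair `p` to `y`, in units of the length of `p`. -/
noncomputable def relDist [PseudoMetricSpace α] (p : α × α) (y : α) : ℝ :=
  dist p.1 y / dist p.1 p.2

theorem BoundedDistortion.relDist_smul_le {G : Type*} [MetricSpace α] [SMul G α] {g : G}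
    {δ : ℝ} {C : ℝ≥0} (hg : BoundedDistortion (g • · : α → α) δ C) {p : α × α}
    (hne : p.1 ≠ p.2) (hp : dist p.1 p.2 < δ) {y : α} (hy : relDist p y ≤ 1) :
    relDist (g • p) (g • y) ≤ relDist p y * Real.exp (2 * C * dist p.1 p.2) := by
  have hle : dist p.1 y ≤ dist p.1 p.2 := (div_le_one (dist_pos.2 hne)).1 hy
  refine (hg p.1 y p.2 (hle.trans_lt hp) hp).trans ?_
  have : C * (dist p.1 y + dist p.1 p.2) ≤ 2 * C * dist p.1 p.2 := by
    linarith [mul_le_mul_of_nonneg_left hle C.coe_nonneg]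
  exact mul_le_mul_of_nonneg_left (Real.exp_le_exp.2 this) (div_nonneg dist_nonneg dist_nonneg)

end Distortion

section ShortGaps

variable {α G : Type*} [LinearOrder α] [PseudoMetricSpace α] [Group G] [MulAction G α] {S : Set G}
  {δ : ℝ}

/-- The gaps of length less than `δ`, at which the generators are controlled by their local
behaviour. -/
def shortGaps (α : Type*) [Preorder α] [Dist α] (δ : ℝ) : Set (α × α) :=
  {p ∈ gaps α | dist p.1 p.2 < δ}

theorem infinite_shortGaps (hgaps : (gaps α).Infinite)
    (hsum : Summable fun p : gaps α => dist p.1.1 p.1.2) (hδ : 0 < δ) :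
    (shortGaps α δ).Infinite :=
  (hgaps.sdiff (finite_le_dist_gaps hsum hδ)).mono fun _ hp =>
    ⟨hp.1, not_le.1 fun h => hp.2 ⟨hp.1, h⟩⟩

/-- The short gaps that some element of `S` expands to length at least `δ`. -/
def exitGaps (S : Set G) (δ : ℝ) : Set (shortGaps α δ) :=
  {v | ∃ s ∈ S, δ ≤ dist (s • v.1.1) (s • v.1.2)}

theorem finite_exitGaps (hfin : S.Finite) (hδ : 0 < δ)
    (hsum : Summable fun p : gaps α => dist p.1.1 p.1.2)
    (hmem : ∀ s ∈ S, ∀ p ∈ gaps α, dist p.1 p.2 < δ → s • p ∈ gaps α) :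
    (exitGaps S δ : Set (shortGaps α δ)).Finite := by
  refine (hfin.biUnion fun s _ => (finite_le_dist_gaps hsum hδ).preimage
    ((MulAction.injective s).comp Subtype.val_injective).injOn).subset ?_
  rintro v ⟨s, hs, hle⟩
  exact mem_biUnion hs ⟨hmem s hs v.1 v.2.1 v.2.2, hle⟩

/-- The graph on the gaps of length less than `δ` whose edges join the distinct gaps that are
carried to each other by an element of `S`. -/
def gapGraph (α : Type*) [Preorder α] [Dist α] [SMul G α] (S : Set G) (δ : ℝ) :
    SimpleGraph (shortGaps α δ) :=
  SimpleGraph.fromRel fun p q => ∃ s ∈ S, s • (p : α × α) = q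

theorem gapGraph_adj_iff (hS : S⁻¹ = S) {p q : shortGaps α δ} :
    (gapGraph α S δ).Adj p q ↔ p ≠ q ∧ ∃ s ∈ S, s • (p : α × α) = q := by
  have hsymm : (∃ s ∈ S, s • (q : α × α) = p) → ∃ s ∈ S, s • (p : α × α) = q := by
    rintro ⟨s, hs, hsq⟩
    exact ⟨s⁻¹, hS ▸ inv_mem_inv.2 hs, by rw [← hsq, inv_smul_smul]⟩
  rw [gapGraph, SimpleGraph.fromRel_adj]
  exact and_congr_right fun _ => or_iff_left_of_imp hsymm

theorem sum_support_le_tsum_of_isPath (hsum : Summable fun p : gaps α => dist p.1.1 p.1.2)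
    {Γ : SimpleGraph (shortGaps α δ)} {u v : shortGaps α δ} {w : Γ.Walk u v} (hw : w.IsPath) :
    (w.support.map fun p => dist p.1.1 p.1.2).sum ≤ ∑' p : gaps α, dist p.1.1 p.1.2 := by
  classical
  rw [← List.sum_toFinset _ hw.support_nodup]
  have hinj : Function.Injective (inclusion (sep_subset _ _) : shortGaps α δ → gaps α) :=
    inclusion_injective _
  exact ((hsum.comp_injective hinj).sum_le_tsum _ fun _ _ => dist_nonneg).trans
    (tsum_comp_le_tsum_of_inj hsum (fun _ => dist_nonneg) hinj)

end ShortGaps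

section GapGraph

variable {α G : Type*} [LinearOrder α] [MetricSpace α] [Group G] [MulAction G α] {S : Set G}
  {δ : ℝ}

theorem exists_mem_supp_mem_exitGaps [Infinite α] [IsMinimal G α] (hS : S⁻¹ = S)
    (hgen : Subgroup.closure S = ⊤)
    (hmem : ∀ s ∈ S, ∀ p ∈ gaps α, dist p.1 p.2 < δ → s • p ∈ gaps α)
    {c : (gapGraph α S δ).ConnectedComponent} (hc : c.supp.Finite) :
    ∃ v ∈ c.supp, v ∈ exitGaps S δ := by
  obtain ⟨s, hs, -, ⟨v, hv, rfl⟩, hnot⟩ := exists_smul_notMem_of_finite hgen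
    (hc.image fun v => v.1.1) (c.nonempty_supp.image _)
  refine ⟨v, hv, s, hs, not_lt.1 fun hlt => hnot ?_⟩
  let q : shortGaps α δ := ⟨s • v.1, hmem s hs v.1 v.2.1 v.2.2, hlt⟩
  refine ⟨q, ?_, rfl⟩
  by_cases hvq : v = q
  · exact hvq ▸ hv
  · exact c.mem_supp_of_adj_mem_supp hv ((gapGraph_adj_iff hS).2 ⟨hvq, s, hs, rfl⟩)

theorem exists_infinite_supp [IsMinimal G α] (hfin : S.Finite) (hS : S⁻¹ = S)
    (hgen : Subgroup.closure S = ⊤) (hδ : 0 < δ) (hgaps : (gaps α).Infinite)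
    (hsum : Summable fun p : gaps α => dist p.1.1 p.1.2)
    (hmem : ∀ s ∈ S, ∀ p ∈ gaps α, dist p.1 p.2 < δ → s • p ∈ gaps α) :
    ∃ c : (gapGraph α S δ).ConnectedComponent, c.supp.Infinite := by
  by_contra! hcomp
  have : Infinite α := infinite_of_infinite_gaps hgaps
  have : Infinite (shortGaps α δ) := (infinite_shortGaps hgaps hsum hδ).to_subtype
  have : Finite (exitGaps S δ : Set (shortGaps α δ)) := finite_exitGaps hfin hδ hsum hmem
  have : Finite (gapGraph α S δ).ConnectedComponent := .of_surjective
    (fun v : (exitGaps S δ : Set (shortGaps α δ)) => (gapGraph α S δ).connectedComponentMk v)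
    fun c => by
      obtain ⟨v, hv, hexit⟩ := exists_mem_supp_mem_exitGaps hS hgen hmem (hcomp c)
      exact ⟨⟨v, hexit⟩, hv⟩
  obtain ⟨c, hc⟩ := Finite.exists_infinite_fiber (gapGraph α S δ).connectedComponentMk
  exact infinite_coe_iff.1 hc (hcomp c)

variable {C : ℝ≥0}

theorem exists_relDist_smul_le_of_walk (hS : S⁻¹ = S)
    (hdist : ∀ s ∈ S, BoundedDistortion (s • · : α → α) δ C) {u v : shortGaps α δ}
    (w : (gapGraph α S δ).Walk u v) :
    ∃ g : G, ∀ y, relDist u.1 y *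
        Real.exp (2 * C * (w.support.map fun p => dist p.1.1 p.1.2).sum) ≤ 1 →
      relDist v.1 (g • y) ≤ relDist u.1 y *
        Real.exp (2 * C * (w.support.map fun p => dist p.1.1 p.1.2).sum) := by
  have hpos : ∀ (p : α × α) y, 0 ≤ relDist p y := fun p y => div_nonneg dist_nonneg dist_nonneg
  induction w with
  | @nil u =>
    refine ⟨1, fun y _ => ?_⟩
    rw [one_smul]
    refine le_mul_of_one_le_right (hpos _ _) (Real.one_le_exp ?_)
    simpa using mul_nonneg (mul_nonneg zero_le_two C.coe_nonneg) dist_nonneg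
  | @cons u u' v hadj w ih =>
    obtain ⟨-, s, hs, hsu⟩ := (gapGraph_adj_iff hS).1 hadj
    obtain ⟨g, hg⟩ := ih
    refine ⟨g * s, fun y hy => ?_⟩
    set σ := (w.support.map fun p => dist p.1.1 p.1.2).sum with hσ
    have hσ0 : 0 ≤ σ := List.sum_nonneg fun x hx => by
      obtain ⟨p, -, rfl⟩ := List.mem_map.1 hx
      exact dist_nonneg
    rw [SimpleGraph.Walk.support_cons, List.map_cons, List.sum_cons, ← hσ, mul_add, Real.exp_add,
      ← mul_assoc] at hy ⊢
    have hle₁ : relDist u.1 y ≤ 1 := by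
      refine le_trans ?_ hy
      rw [mul_assoc, ← Real.exp_add]
      exact le_mul_of_one_le_right (hpos _ _) (Real.one_le_exp (by positivity))
    have hstep : relDist u'.1 (s • y) ≤ relDist u.1 y * Real.exp (2 * C * dist u.1.1 u.1.2) :=
      hsu ▸ (hdist s hs).relDist_smul_le (fst_ne_snd_of_mem_gaps u.2.1) u.2.2 hle₁
    have hstep' := mul_le_mul_of_nonneg_right hstep (Real.exp_pos (2 * C * σ)).le
    rw [mul_smul]
    exact (hg _ (hstep'.trans hy)).trans hstep'

theorem exists_dist_smul_lt_of_reachable (hS : S⁻¹ = S)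
    (hdist : ∀ s ∈ S, BoundedDistortion (s • · : α → α) δ C)
    (hsum : Summable fun p : gaps α => dist p.1.1 p.1.2) {u v : shortGaps α δ}
    (huv : (gapGraph α S δ).Reachable u v) :
    ∃ g : G, ∀ y, relDist u.1 y * Real.exp (2 * C * ∑' p : gaps α, dist p.1.1 p.1.2) < 1 →
      dist v.1.1 (g • y) < dist v.1.1 v.1.2 := by
  obtain ⟨w, hw⟩ := huv.exists_isPath
  obtain ⟨g, hg⟩ := exists_relDist_smul_le_of_walk hS hdist w
  refine ⟨g, fun y hy => ?_⟩
  have hlt : relDist u.1 y *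
      Real.exp (2 * C * (w.support.map fun p => dist p.1.1 p.1.2).sum) < 1 := by
    refine lt_of_le_of_lt (mul_le_mul_of_nonneg_left (Real.exp_le_exp.2 ?_)
      (div_nonneg dist_nonneg dist_nonneg)) hy
    exact mul_le_mul_of_nonneg_left (sum_support_le_tsum_of_isPath hsum hw) (by positivity)
  exact (div_lt_one (dist_pos.2 (fst_ne_snd_of_mem_gaps v.2.1))).1 ((hg y hlt.le).trans_lt hlt)

theorem exists_ball_contracting_of_infinite_supp (hS : S⁻¹ = S)
    (hdist : ∀ s ∈ S, BoundedDistortion (s • · : α → α) δ C)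
    (hsum : Summable fun p : gaps α => dist p.1.1 p.1.2)
    {c : (gapGraph α S δ).ConnectedComponent} (hc : c.supp.Infinite) :
    ∃ x : α, ∃ r > 0, ∀ ε > 0, ∃ g : G, ∃ z, g • ball x r ⊆ ball z ε := by
  obtain ⟨u, hu⟩ := hc.nonempty
  have hlen : 0 < dist u.1.1 u.1.2 := dist_pos.2 (fst_ne_snd_of_mem_gaps u.2.1)
  set E := Real.exp (2 * C * ∑' p : gaps α, dist p.1.1 p.1.2)
  have hE : 0 < E := Real.exp_pos _
  refine ⟨u.1.1, dist u.1.1 u.1.2 / E, div_pos hlen hE, fun ε hε => ?_⟩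
  obtain ⟨-, ⟨v, hv, rfl⟩, hvε⟩ := (hc.image Subtype.val_injective.injOn).exists_notMem_finite
    (finite_le_dist_gaps hsum hε)
  have hlt : dist v.1.1 v.1.2 < ε := not_le.1 fun h => hvε ⟨v.2.1, h⟩
  obtain ⟨g, hg⟩ := exists_dist_smul_lt_of_reachable hS hdist hsum
    (SimpleGraph.ConnectedComponent.exact (hu.trans hv.symm))
  refine ⟨g, v.1.1, image_subset_iff.2 fun y hy => ?_⟩
  refine mem_ball'.2 ((hg y ?_).trans hlt)
  rw [relDist, div_mul_eq_mul_div, div_lt_one hlen]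
  exact (lt_div_iff₀ hE).1 (mem_ball'.1 hy)

end GapGraph

theorem exists_finite_symm_closure_eq_top (G : Type*) [Group G] [hG : Group.FG G] :
    ∃ S : Set G, S.Finite ∧ S⁻¹ = S ∧ Subgroup.closure S = ⊤ := by
  obtain ⟨S, hS, hfin⟩ := Group.fg_iff.1 hG
  refine ⟨S ∪ S⁻¹, hfin.union hfin.inv, ?_, ?_⟩
  · rw [union_inv, inv_inv, union_comm]
  · rw [Subgroup.closure_union, Subgroup.closure_inv, sup_idem, hS]

theorem exists_isFreePair_of_boundedDistortion {α G : Type*} [LinearOrder α] [MetricSpace α]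
    [CompactSpace α] [Group G] [Group.FG G] [MulAction G α] [ContinuousConstSMul G α]
    [IsMinimal G α] (hgaps : (gaps α).Infinite)
    (hsum : Summable fun p : gaps α => dist p.1.1 p.1.2)
    (hbetw : ∀ g : G, ∀ᶠ δ in 𝓝[>] 0, PreservesBetweenness (g • · : α → α) δ)
    (hdist : ∀ g : G, ∀ᶠ c : ℝ × ℝ≥0 in 𝓝[>] 0 ×ˢ atTop,
      BoundedDistortion (g • · : α → α) c.1 c.2) : ∃ a b : G, IsFreePair a b := by
  have : Infinite α := infinite_of_infinite_gaps hgaps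
  obtain ⟨S, hfin, hS, hgen⟩ := exists_finite_symm_closure_eq_top G
  obtain ⟨⟨δ, C⟩, ⟨hδ, hmem⟩, hdistS⟩ := (((eventually_mem_nhdsWithin.and
    ((eventually_all_finite hfin).2 fun s _ => eventually_smul_mem_gaps (hbetw s⁻¹))).prod_inl
    atTop).and ((eventually_all_finite hfin).2 fun s _ => hdist s)).exists
  obtain ⟨c, hc⟩ := exists_infinite_supp hfin hS hgen hδ hgaps hsum hmem
  obtain ⟨x, r, hr, hcontr⟩ := exists_ball_contracting_of_infinite_supp hS hdistS hsum hc
  exact exists_isFreePair_of_contracting isOpen_ball (nonempty_ball.2 hr) hcontr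

section LocalExtension

/-- `F` is a `C¹` embedding of `I` with derivative `F'`, which does not vanish and whose
logarithm is `C`-Lipschitz. -/
structure IsLipEmbeddingOn (F F' : ℝ → ℝ) (C : ℝ≥0) (I : Set ℝ) : Prop where
  hasDerivAt : ∀ y ∈ I, HasDerivAt F (F' y) y
  deriv_ne_zero : ∀ y ∈ I, F' y ≠ 0
  continuousOn_deriv : ContinuousOn F' I
  injOn : InjOn F I
  lipschitzOnWith : LipschitzOnWith C (fun y => Real.log |F' y|) I

namespace IsLipEmbeddingOn

variable {F F' : ℝ → ℝ} {C : ℝ≥0} {I : Set ℝ}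

theorem mono (hF : IsLipEmbeddingOn F F' C I) {D : ℝ≥0} (hCD : C ≤ D) {J : Set ℝ} (hJ : J ⊆ I) :
    IsLipEmbeddingOn F F' D J where
  hasDerivAt y hy := hF.hasDerivAt y (hJ hy)
  deriv_ne_zero y hy := hF.deriv_ne_zero y (hJ hy)
  continuousOn_deriv := hF.continuousOn_deriv.mono hJ
  injOn := hF.injOn.mono hJ
  lipschitzOnWith := (hF.lipschitzOnWith.mono hJ).weaken hCD

theorem continuousOn (hF : IsLipEmbeddingOn F F' C I) : ContinuousOn F I :=
  fun y hy => (hF.hasDerivAt y hy).continuousAt.continuousWithinAt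

theorem exists_dist_eq [I.OrdConnected] (hF : IsLipEmbeddingOn F F' C I) {x y : ℝ} (hx : x ∈ I)
    (hy : y ∈ I) : ∃ ξ ∈ uIcc x y, dist (F x) (F y) = |F' ξ| * dist x y := by
  wlog hxy : x ≤ y generalizing x y
  · simpa only [uIcc_comm, dist_comm] using this hy hx (le_of_not_ge hxy)
  rcases hxy.eq_or_lt with rfl | hlt
  · exact ⟨x, left_mem_uIcc, by simp only [dist_self, mul_zero]⟩
  have hsub : Icc x y ⊆ I := I.Icc_subset hx hy
  obtain ⟨ξ, hξ, hslope⟩ := exists_hasDerivAt_eq_slope F F' hlt (hF.continuousOn.mono hsub)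
    fun z hz => hF.hasDerivAt z (hsub (Ioo_subset_Icc_self hz))
  refine ⟨ξ, Icc_subset_uIcc (Ioo_subset_Icc_self hξ), ?_⟩
  rw [dist_comm, dist_comm x, Real.dist_eq, Real.dist_eq, ← abs_mul, hslope,
    div_mul_cancel₀ _ (sub_ne_zero.2 hlt.ne')]

theorem deriv_div_le (hF : IsLipEmbeddingOn F F' C I) {ξ ζ : ℝ} (hξ : ξ ∈ I) (hζ : ζ ∈ I) :
    |F' ξ| / |F' ζ| ≤ Real.exp (C * dist ξ ζ) := by
  have hξ0 := abs_pos.2 (hF.deriv_ne_zero ξ hξ)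
  have hζ0 := abs_pos.2 (hF.deriv_ne_zero ζ hζ)
  rw [← Real.log_le_iff_le_exp (div_pos hξ0 hζ0), Real.log_div hξ0.ne' hζ0.ne']
  exact (le_abs_self _).trans (hF.lipschitzOnWith.dist_le_mul ξ hξ ζ hζ)

theorem dist_div_dist_le [I.OrdConnected] (hF : IsLipEmbeddingOn F F' C I) {x y z : ℝ}
    (hx : x ∈ I) (hy : y ∈ I) (hz : z ∈ I) :
    dist (F x) (F y) / dist (F x) (F z) ≤
      dist x y / dist x z * Real.exp (C * (dist x y + dist x z)) := by
  obtain ⟨ξ, hξ, hFy⟩ := hF.exists_dist_eq hx hy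
  obtain ⟨ζ, hζ, hFz⟩ := hF.exists_dist_eq hx hz
  have hξζ : dist ξ ζ ≤ dist x y + dist x z := (dist_triangle_left ξ ζ x).trans
    (add_le_add (Real.dist_left_le_of_mem_uIcc hξ) (Real.dist_left_le_of_mem_uIcc hζ))
  calc dist (F x) (F y) / dist (F x) (F z)
      = dist x y / dist x z * (|F' ξ| / |F' ζ|) := by rw [hFy, hFz, mul_div_mul_comm, mul_comm]
    _ ≤ dist x y / dist x z * Real.exp (C * dist ξ ζ) := by
      gcongr
      exact hF.deriv_div_le (OrdConnected.uIcc_subset ‹_› hx hy hξ)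
        (OrdConnected.uIcc_subset ‹_› hx hz hζ)
    _ ≤ dist x y / dist x z * Real.exp (C * (dist x y + dist x z)) := by gcongr

end IsLipEmbeddingOn

variable {A : Set ℝ}

/-- Near `x`, at distance less than `δ`, the self-map `φ` of `A` is the restriction of a
`C^{1+Lip}` embedding whose log-derivative has Lipschitz constant `C`. -/
def HasLipExtension (φ : A → A) (x : A) (δ : ℝ) (C : ℝ≥0) : Prop :=
  ∃ F F' : ℝ → ℝ, IsLipEmbeddingOn F F' C (ball x δ) ∧ ∀ y ∈ ball x δ, F y = φ y

theorem boundedDistortion_of_hasLipExtension {φ : A → A} {δ : ℝ} {C : ℝ≥0}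
    (hφ : ∀ x, HasLipExtension φ x δ C) : BoundedDistortion φ δ C := by
  intro x y z hxy hxz
  obtain ⟨F, F', hF, heq⟩ := hφ x
  have := (convex_ball (x : ℝ) δ).ordConnected
  have hx : x ∈ ball x δ := mem_ball_self (dist_nonneg.trans_lt hxy)
  have hy : y ∈ ball x δ := mem_ball'.2 hxy
  have hz : z ∈ ball x δ := mem_ball'.2 hxz
  have key := hF.dist_div_dist_le hx hy hz
  rwa [heq x hx, heq y hy, heq z hz] at key

theorem preservesBetweenness_of_hasLipExtension {φ : A → A} {δ : ℝ} {C : ℝ≥0}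
    (hφ : ∀ x, HasLipExtension φ x δ C) : PreservesBetweenness φ δ := by
  intro x y hxy w hw
  obtain ⟨F, F', hF, heq⟩ := hφ x
  have hord := (convex_ball (x : ℝ) δ).ordConnected
  have hδ : 0 < δ := dist_nonneg.trans_lt hxy
  have hx : x ∈ ball x δ := mem_ball_self hδ
  have hy : y ∈ ball x δ := mem_ball'.2 hxy
  have hsub : uIcc (x : ℝ) y ⊆ ball x δ := hord.uIcc_subset hx hy
  have hw' : (w : ℝ) ∈ uIcc (x : ℝ) y := (Subtype.mono_coe (· ∈ A)).mapsTo_uIcc hw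
  have hmaps : MapsTo F (uIcc x y) (uIcc (F x) (F y)) := by
    have hinj := hF.injOn
    have hcont := hF.continuousOn
    rw [Real.ball_eq_Ioo] at hinj hcont hsub
    rcases hcont.strictMonoOn_of_injOn_Ioo (by linarith) hinj with h | h
    · exact (h.monotoneOn.mono hsub).mapsTo_uIcc
    · exact (h.antitoneOn.mono hsub).mapsTo_uIcc
  have key := hmaps hw'
  rwa [heq x hx, heq y hy, heq w (hsub hw')] at key

theorem HasLipExtension.apply_mem_interior {φ : A → A} {δ : ℝ} {C : ℝ≥0} (hδ : 0 < δ) {x : A}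
    (hφ : HasLipExtension φ x δ C) (hx : (x : ℝ) ∈ interior A) : (φ x : ℝ) ∈ interior A := by
  obtain ⟨F, F', hF, heq⟩ := hφ
  have hball : ball (x : ℝ) δ ∈ 𝓝 (x : ℝ) := ball_mem_nhds _ hδ
  have hstrict := hasStrictDerivAt_of_hasDerivAt_of_continuousAt
    (Filter.mem_of_superset hball hF.hasDerivAt) (hF.continuousOn_deriv.continuousAt hball)
  rw [mem_interior_iff_mem_nhds] at hx ⊢
  rw [← heq x (mem_ball_self hδ),
    ← hstrict.map_nhds_eq (hF.deriv_ne_zero x (mem_ball_self hδ)), mem_map]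
  filter_upwards [hx, hball] with y hyA hy
  exact mem_preimage.2 (heq ⟨y, hyA⟩ hy ▸ (φ ⟨y, hyA⟩).2)

theorem interior_eq_empty_of_hasLipExtension {G : Type*} [Group G] [MulAction G A]
    [IsMinimal G A] [Nonempty A] (hA : IsCompact A)
    (hext : ∀ g : G, ∃ δ > 0, ∃ C, ∀ x : A, HasLipExtension (g • · : A → A) x δ C) :
    interior A = ∅ := by
  have hsmul : ∀ (g : G) (x : A), (x : ℝ) ∈ interior A → ((g • x : A) : ℝ) ∈ interior A :=
    fun g x hx => by
      obtain ⟨δ, hδ, C, hφ⟩ := hext g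
      exact (hφ x).apply_mem_interior hδ hx
  set B : Set A := {x | (x : ℝ) ∉ interior A}
  have hB : IsClosed B := isOpen_interior.isClosed_compl.preimage continuous_subtype_val
  have hinv : ∀ g : G, g • B ⊆ B := fun g =>
    image_subset_iff.2 fun x hx h => hx (inv_smul_smul g x ▸ hsmul g⁻¹ _ h)
  rcases eq_empty_or_univ_of_smul_invariant_closed G hB hinv with h | h
  · have hopen : IsOpen A := interior_eq_iff_isOpen.1 <| interior_subset.antisymm fun x hx =>
      not_not.1 (eq_empty_iff_forall_notMem.1 h ⟨x, hx⟩)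
    exact (hA.ne_univ (IsClopen.eq_univ ⟨hA.isClosed, hopen⟩ (nonempty_coe_sort.1 ‹_›))).elim
  · exact eq_empty_of_forall_notMem fun x hx =>
      eq_univ_iff_forall.1 h ⟨x, interior_subset hx⟩ hx

theorem exists_isFreePair_of_hasLipExtension {G : Type*} [Group G] [Group.FG G] [MulAction G A]
    [ContinuousConstSMul G A] [IsMinimal G A] [Infinite A] (hA : IsCompact A)
    (hext : ∀ g : G, ∀ᶠ c : ℝ × ℝ≥0 in 𝓝[>] 0 ×ˢ atTop,
      ∀ x : A, HasLipExtension (g • · : A → A) x c.1 c.2) :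
    ∃ a b : G, IsFreePair a b := by
  have : CompactSpace A := isCompact_iff_compactSpace.1 hA
  have hint : interior A = ∅ := interior_eq_empty_of_hasLipExtension hA fun g => by
    obtain ⟨c, hδ, hc⟩ := ((eventually_mem_nhdsWithin.prod_inl atTop).and (hext g)).exists
    exact ⟨c.1, hδ, c.2, hc⟩
  refine exists_isFreePair_of_boundedDistortion (infinite_gaps hA hint)
    (summable_dist_gaps hA.isBounded) (fun g => ?_) fun g =>
      (hext g).mono fun c => boundedDistortion_of_hasLipExtension
  exact (hext g).curry.mono fun δ h => preservesBetweenness_of_hasLipExtension h.exists.choose_spec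

end LocalExtension

section Restriction

variable {K A : Set ℝ}

theorem apK_of_mem (f : Equiv.Perm K) {x : ℝ} (hx : x ∈ K) : apK K f x = f ⟨x, hx⟩ :=
  dif_pos hx

theorem IsD1Lip.eventually_hasLipExtension {f : Equiv.Perm K} (hf : IsD1Lip K f)
    (hA : IsCompact A) (hAK : A ⊆ K) {φ : A → A} (hφ : ∀ x, (φ x : ℝ) = apK K f x) :
    ∀ᶠ c : ℝ × ℝ≥0 in 𝓝[>] 0 ×ˢ atTop, ∀ x, HasLipExtension φ x c.1 c.2 := by
  have : CompactSpace A := isCompact_iff_compactSpace.1 hA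
  suffices hlocal : ∀ x : A, ∀ᶠ q : (ℝ × ℝ≥0) × A in (𝓝[>] 0 ×ˢ atTop) ×ˢ 𝓝 x,
      HasLipExtension φ q.2 q.1.1 q.1.2 by
    have := isCompact_univ.mem_prod_nhdsSet_of_forall fun x _ => hlocal x
    rwa [nhdsSet_univ, mem_prod_top] at this
  intro x
  obtain ⟨a, b, hx, F, F', hderiv, hcont, hinj, ⟨C, hlip⟩, heq⟩ := hf ⟨x, hAK x.2⟩
  have hF : IsLipEmbeddingOn F F' C (Ioo a b) :=
    ⟨fun y hy => (hderiv y hy).1, fun y hy => (hderiv y hy).2, hcont, hinj, hlip⟩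
  obtain ⟨ρ, hρ, hball⟩ := Metric.isOpen_iff.1 isOpen_Ioo _ hx
  filter_upwards [prod_mem_prod (prod_mem_prod (Ioo_mem_nhdsGT (half_pos hρ)) (mem_atTop C))
    (ball_mem_nhds x (half_pos hρ))]
  rintro ⟨⟨δ, D⟩, y⟩ ⟨⟨hδ, hCD⟩, hy⟩
  have hsub : ball (y : ℝ) δ ⊆ Ioo a b :=
    (ball_subset_ball' (add_halves ρ ▸ add_le_add hδ.2.le (mem_ball.1 hy).le)).trans hball
  exact ⟨F, F', hF.mono hCD hsub, fun z hz => (heq z (hsub hz) (hAK z.2)).trans (hφ z).symm⟩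

variable {G : Subgroup (Equiv.Perm K)}

/-- The action of `G` on a `G`-invariant subset `A` of `K`. -/
noncomputable abbrev restrictAction (hAK : A ⊆ K) (hinv : IsInvariantSet K G A) :
    MulAction G A where
  smul g x := ⟨apK K g x, hinv g g.2 x x.2⟩
  one_smul x := Subtype.ext (apK_of_mem _ (hAK x.2))
  mul_smul g h x := Subtype.ext <| by
    have hx : (x : ℝ) ∈ K := hAK x.2
    change apK K (g * h : G) x = apK K g (apK K h x)
    rw [apK_of_mem _ hx, apK_of_mem _ hx, apK_of_mem _ (Subtype.coe_prop _)]
    rfl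

theorem continuousConstSMul_restrictAction (hcont : ∀ g ∈ G, Continuous g) (hAK : A ⊆ K)
    (hinv : IsInvariantSet K G A) :
    let _ := restrictAction hAK hinv
    ContinuousConstSMul G A :=
  let _ := restrictAction hAK hinv
  ⟨fun g => Continuous.subtype_mk ((continuous_subtype_val.comp
    ((hcont g g.2).comp (continuous_inclusion hAK))).congr
      fun x => (apK_of_mem _ (hAK x.2)).symm) _⟩

theorem IsMinimalInvariantSet.isMinimal_restrictAction (hmin : IsMinimalInvariantSet K G A)
    (hcont : ∀ g ∈ G, Continuous g) :
    let _ := restrictAction hmin.2.1 hmin.2.2.2.1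
    IsMinimal G A := by
  obtain ⟨-, hAK, hclosed, hinv, hmin⟩ := hmin
  let _ := restrictAction hAK hinv
  have := continuousConstSMul_restrictAction hcont hAK hinv
  refine (isMinimal_iff_isClosed_smul_invariant G).2 fun s hs hsmul => ?_
  refine s.eq_empty_or_nonempty.imp_right fun hne => ?_
  have himage : (↑) '' s = A := hmin _ (hne.image _) (Subtype.coe_image_subset A s)
    (hclosed.isClosedMap_subtype_val s hs) <| by
      rintro g hg - ⟨x, hx, rfl⟩
      exact ⟨_, hsmul ⟨g, hg⟩ (smul_mem_smul_set hx), rfl⟩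
  exact Subtype.val_injective.image_injective (himage.trans (Subtype.coe_image_univ A).symm)

end Restriction

theorem minimal_invariant_finite_general {K : Set ℝ} {G : Subgroup (Equiv.Perm K)}
    (hdiff : ∀ g ∈ G, MemDiffLip K g) (hFG : G.FG) (hfree : HasNoFreeSubsemigroup G)
    {A : Set ℝ} (hA : IsCompact A) (hmin : IsMinimalInvariantSet K G A) : A.Finite := by
  by_contra hinf
  have hcont : ∀ g ∈ G, Continuous g := fun g hg => (hdiff g hg).1
  have hAK : A ⊆ K := hmin.2.1
  have hinv : IsInvariantSet K G A := hmin.2.2.2.1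
  let _ := restrictAction hAK hinv
  have : ContinuousConstSMul G A := continuousConstSMul_restrictAction hcont hAK hinv
  have : IsMinimal G A := hmin.isMinimal_restrictAction hcont
  have : Group.FG G := (Group.fg_iff_subgroup_fg G).2 hFG
  have : Infinite A := infinite_coe_iff.2 hinf
  obtain ⟨a, b, hab⟩ := exists_isFreePair_of_hasLipExtension (G := G) hA fun g =>
    (hdiff g g.2).2.2.eventually_hasLipExtension hA hAK fun _ => rfl
  exact hfree ⟨a, a.2, b, b.2, hab.map G.subtype_injective⟩

/-- If `G` is finitely generated with no free subsemigroup on two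
generators, every minimal invariant set of the action of `G` on `K` is finite. -/
theorem minimal_invariant_finite (K : Set ℝ) (hK : IsCantorInR K)
    (G : Subgroup (Equiv.Perm K))
    (hdiff : ∀ g ∈ G, MemDiffLip K g)
    (hFG : G.FG)
    (hfree : HasNoFreeSubsemigroup G) :
    ∀ A : Set ℝ, IsMinimalInvariantSet K G A → A.Finite :=
  fun _ hmin => minimal_invariant_finite_general hdiff hFG hfree
    (hK.2.1.of_isClosed_subset hmin.2.2.1 hmin.2.1) hmin
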